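/- Let λ > 0 and Ω > 0 be real numbers. Define the rescaled Geroch potential φ̃_G = Ω^{-1/2}·λ^{-1/4}·(1 - √λ) and the rescaled (static) Hansen potential φ̃_H = Ω^{-1/2}·(1 - λ²)/(4λ). Then φ̃_H = (φ̃_G/4)·(Ω·φ̃_G² + 2)·√(Ω·φ̃_G² + 4). -/

import Mathlib

/-!
Put `l = exp (-4 * t)`. The unrescaled Geroch potential is then `2 * sinh t` and the static Hansen
potential is `sinh (4 * t) / 2`, so at `Ω = 1` the relation is the duplication formula for `sinh`
applied twice, with `cosh (2 * t)` and `cosh t` expressed through `sinh t`. The general case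
follows because `Ω * (φ / √Ω) ^ 2 = φ ^ 2`, so both sides scale by the factor `1 / √Ω`.
-/

section Potentials

open Real

/-- The (unrescaled) Geroch potential `φ_G` as a function of `l`, the squared norm (up to sign) of
the Killing vector. -/
noncomputable def gerochPotential (l : ℝ) : ℝ :=
  l ^ (-(1 / 4) : ℝ) * (1 - √l)

/-- The (unrescaled) Hansen potential `φ_H` of a static spacetime as a function of `l`, the squared
norm (up to sign) of the Killing vector. -/
noncomputable def hansenPotential (l : ℝ) : ℝ :=
  (1 - l ^ 2) / (4 * l)

theorem gerochPotential_exp (t : ℝ) : gerochPotential (exp (-4 * t)) = 2 * sinh t := by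
  have h_rpow : exp (-4 * t) ^ (-(1 / 4) : ℝ) = exp t := by
    rw [← exp_mul]
    ring_nf
  have h_sqrt : √(exp (-4 * t)) = exp (-t) ^ 2 := by
    rw [← exp_half, ← exp_nat_mul]
    ring_nf
  have h_inv : exp t * exp (-t) = 1 := by
    rw [← exp_add, add_neg_cancel, exp_zero]
  rw [gerochPotential, h_rpow, h_sqrt, sinh_eq]
  linear_combination -exp (-t) * h_inv

theorem hansenPotential_exp (t : ℝ) : hansenPotential (exp (-4 * t)) = sinh (4 * t) / 2 := by
  rw [hansenPotential, sinh_eq, neg_mul, exp_neg]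
  field_simp
  ring

theorem sqrt_two_mul_sinh_sq_add_four (t : ℝ) : √((2 * sinh t) ^ 2 + 4) = 2 * cosh t := by
  have h_sq : (2 * sinh t) ^ 2 + 4 = (2 * cosh t) ^ 2 := by
    rw [mul_pow, mul_pow, cosh_sq]
    ring
  rw [h_sq, sqrt_sq (by positivity)]

theorem sinh_four_mul (t : ℝ) :
    sinh (4 * t) = 4 * sinh t * cosh t * (2 * sinh t ^ 2 + 1) := by
  calc
    sinh (4 * t) = sinh (2 * (2 * t)) := by ring_nf
    _ = 2 * (2 * sinh t * cosh t) * (cosh t ^ 2 + sinh t ^ 2) := by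
      rw [sinh_two_mul, sinh_two_mul, cosh_two_mul]
    _ = 4 * sinh t * cosh t * (2 * sinh t ^ 2 + 1) := by
      rw [cosh_sq]
      ring

theorem hansenPotential_eq_gerochPotential_mul_sqrt {l : ℝ} (hl : 0 < l) :
    hansenPotential l = gerochPotential l / 4 * (gerochPotential l ^ 2 + 2) *
      √(gerochPotential l ^ 2 + 4) := by
  obtain ⟨t, rfl⟩ : ∃ t, l = exp (-4 * t) :=
    ⟨-log l / 4, by rw [show -4 * (-log l / 4) = log l by ring, exp_log hl]⟩
  rw [gerochPotential_exp, hansenPotential_exp, sqrt_two_mul_sinh_sq_add_four, sinh_four_mul]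
  ring

theorem mul_rpow_neg_half_mul_sq {Ω : ℝ} (hΩ : 0 < Ω) (x : ℝ) :
    Ω * (Ω ^ (-(1 / 2) : ℝ) * x) ^ 2 = x ^ 2 := by
  rw [rpow_neg hΩ.le, ← sqrt_eq_rpow, mul_pow, inv_pow, sq_sqrt hΩ.le,
    mul_inv_cancel_left₀ hΩ.ne']

end Potentials

/-- For `λ > 0`, `Ω > 0`, the rescaled Geroch potential
`φ̃_G = Ω^{-1/2}·λ^{-1/4}·(1-√λ)` and rescaled static Hansen potential
`φ̃_H = Ω^{-1/2}·(1-λ²)/(4λ)` satisfy `φ̃_H = (φ̃_G/4)·(Ω·φ̃_G²+2)·√(Ω·φ̃_G²+4)`. -/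
theorem stmt_17 (l Ω : ℝ) (hl : 0 < l) (hΩ : 0 < Ω)
    (φG φH : ℝ)
    (hG : φG = Ω ^ (-(1 / 2) : ℝ) * l ^ (-(1 / 4) : ℝ) * (1 - Real.sqrt l))
    (hH : φH = Ω ^ (-(1 / 2) : ℝ) * ((1 - l ^ 2) / (4 * l))) :
    φH = φG / 4 * (Ω * φG ^ 2 + 2) * Real.sqrt (Ω * φG ^ 2 + 4) := by
  have hG' : φG = Ω ^ (-(1 / 2) : ℝ) * gerochPotential l := by
    rw [hG, gerochPotential, mul_assoc]
  have hH' : φH = Ω ^ (-(1 / 2) : ℝ) * hansenPotential l := hH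
  rw [hG', hH', mul_rpow_neg_half_mul_sq hΩ, hansenPotential_eq_gerochPotential_mul_sqrt hl]
  ring
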